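/- arXiv:1205.5424 — 2 statements merged into one kernel-verified Lean document; each statement's English description precedes it below -/
import Mathlib

section
/- Every matroid perspective factorizes: if M → M' is a matroid perspective on a finite ground set E ⊆ α, then there exist a natural number k and a matroid N on the type α ⊕ Fin k whose ground set is (Sum.inl '' E) ∪ (Sum.inr '' Set.univ), such that deleting the elements of Sum.inr '' Set.univ from N yields the image of M under Sum.inl, and contracting the elements of Sum.inr '' Set.univ in N yields the image of M' under Sum.inl. -/
open Set

/-- The rank of a set in a matroid: the largest cardinality of an independent subset. -/
noncomputable def Matroid.rk' {α : Type*} (M : Matroid α) (X : Set α) : ℕ :=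
  sSup {n | ∃ I, M.Indep I ∧ I ⊆ X ∧ I.ncard = n}

/-- Deletion of a set from a matroid. -/
def Matroid.delete' {α : Type*} (M : Matroid α) (D : Set α) : Matroid α :=
  M.restrict (M.E \ D)

/-- Contraction of a set in a matroid, defined by duality. -/
def Matroid.contract' {α : Type*} (M : Matroid α) (C : Set α) : Matroid α :=
  (M✶.delete' C)✶

/-- `M → M'` is a matroid perspective (`M'` is a quotient of `M`):
`r'(X) - r'(Y) ≤ r(X) - r(Y)` for all `Y ⊆ X ⊆ E`. -/
def Matroid.IsPersp {α : Type*} (M M' : Matroid α) : Prop :=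
  M.E = M'.E ∧ ∀ ⦃Y X : Set α⦄, Y ⊆ X → X ⊆ M.E →
    (M'.rk' X : ℤ) - M'.rk' Y ≤ (M.rk' X : ℤ) - M.rk' Y

/-!
Fix a set `β` of extra elements with `r(M) ≤ r(M') + |β|`, and call `S ⊆ E ∪ β` independent when
`S ∩ E` is independent in `M` and `|S| ≤ r'(S ∩ E) + |β|`. Deleting `β` leaves the first condition
alone, since every `M`-independent `X` satisfies `|X| = r(X) ≤ r'(X) + |β|`; contracting `β` turns
the second one into `|X| ≤ r'(X)`, that is, into independence in `M'`. For augmentation, if the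
cardinality bound is strict for `S`, one augments in `M` or in `β`. If it is attained, `S` is
enlarged by an element outside the `M'`-closure of `S ∩ E`, and such an element is also outside the
`M`-closure because `M'` is a quotient of `M`.
-/

section Perspective

variable {α β : Type*} {M M' : Matroid α} {X Y : Set α} {S T : Set (α ⊕ β)} {e : α}

theorem rk'_eq_toNat_eRk (M : Matroid α) (X : Set α) : M.rk' X = (M.eRk X).toNat := by
  obtain hX | hX := eq_or_ne (M.eRk X) ⊤
  · have not_bddAbove : ¬ BddAbove {n | ∃ I, M.Indep I ∧ I ⊆ X ∧ I.ncard = n} := by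
      rintro ⟨b, hb⟩
      obtain ⟨I, hIX, hI, hcard⟩ := Matroid.le_eRk_iff.1 (hX ▸ le_top : ((b + 1 : ℕ) : ℕ∞) ≤ _)
      have : I.ncard ≤ b := hb ⟨I, hI, hIX, rfl⟩
      rw [ncard_def, hcard, ENat.toNat_natCast] at this
      omega
    rw [Matroid.rk', Nat.sSup_of_not_bddAbove not_bddAbove, hX, ENat.toNat_top]
  · refine IsGreatest.csSup_eq ⟨?_, ?_⟩
    · obtain ⟨I, hI⟩ := M.exists_isBasis' X
      exact ⟨I, hI.indep, hI.subset, by rw [ncard_def, hI.encard_eq_eRk]⟩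
    · rintro _ ⟨I, hI, hIX, rfl⟩
      exact ENat.toNat_le_toNat (hI.encard_le_eRk_of_subset hIX) hX

theorem cast_rk'_eq_eRk (hX : M.IsRkFinite X) : (M.rk' X : ℕ∞) = M.eRk X := by
  rw [rk'_eq_toNat_eRk, ENat.natCast_toNat (Matroid.eRk_ne_top_iff.2 hX)]

theorem delete'_eq_delete (M : Matroid α) (D : Set α) : M.delete' D = M.delete D := rfl

theorem contract'_eq_contract (M : Matroid α) (C : Set α) : M.contract' C = M.contract C := rfl

theorem closure_subset_closure_of_isPersp (hq : M.IsPersp M') (hX : M'.IsRkFinite X)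
    (hXE : X ⊆ M.E) : M.closure X ⊆ M'.closure X := by
  intro e he
  by_contra he'
  have heE : e ∈ M.E := M.closure_subset_ground X he
  have hr : M.rk' (insert e X) = M.rk' X := by
    rw [rk'_eq_toNat_eRk, rk'_eq_toNat_eRk, ← M.eRk_closure_eq (insert e X),
      Matroid.closure_insert_eq_of_mem_closure he, M.eRk_closure_eq]
  have hr' : M'.rk' (insert e X) = M'.rk' X + 1 := by
    have := Matroid.eRk_insert_eq_add_one ⟨hq.1 ▸ heE, he'⟩
    rw [← cast_rk'_eq_eRk hX, ← cast_rk'_eq_eRk (hX.insert e)] at this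
    exact_mod_cast this
  have := hq.2 (subset_insert e X) (insert_subset heE hXE)
  omega

theorem eRk_add_eRk_le_of_isPersp (hq : M.IsPersp M') (hX : M.IsRkFinite X) (hX' : M'.IsRkFinite X)
    (hYX : Y ⊆ X) (hXE : X ⊆ M.E) : M'.eRk X + M.eRk Y ≤ M.eRk X + M'.eRk Y := by
  have := hq.2 hYX hXE
  rw [← cast_rk'_eq_eRk hX, ← cast_rk'_eq_eRk hX', ← cast_rk'_eq_eRk (hX.subset hYX),
    ← cast_rk'_eq_eRk (hX'.subset hYX)]
  norm_cast
  omega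

theorem eRk_le_eRk_add_of_isPersp [M'.RankFinite] (hq : M.IsPersp M') {k : ℕ}
    (hk : M.eRank ≤ M'.eRank + k) (hXE : X ⊆ M.E) : M.eRk X ≤ M'.eRk X + k := by
  have hr' : M'.eRank ≠ ⊤ := M'.eRank_ne_top_iff.2 inferInstance
  have : M.RankFinite :=
    M.eRank_ne_top_iff.1 <|
      ne_top_of_le_ne_top (WithTop.add_ne_top.2 ⟨hr', ENat.natCast_ne_top k⟩) hk
  have hE :=
    eRk_add_eRk_le_of_isPersp hq M.isRkFinite_ground (M'.isRkFinite_set M.E) hXE subset_rfl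
  rw [M.eRk_ground, hq.1, M'.eRk_ground] at hE
  refine (ENat.add_le_add_iff_left hr').1 (hE.trans ?_)
  calc M.eRank + M'.eRk X ≤ M'.eRank + k + M'.eRk X := by gcongr
    _ = M'.eRank + (M'.eRk X + k) := by rw [add_assoc, add_comm (k : ℕ∞)]

theorem indep_of_isPersp [M'.RankFinite] (hq : M.IsPersp M') (hX : M'.Indep X) : M.Indep X := by
  have hXE : X ⊆ M.E := hq.1 ▸ hX.subset_ground
  rw [Matroid.indep_iff_forall_notMem_closure_sdiff hXE]
  rw [Matroid.indep_iff_forall_notMem_closure_sdiff hX.subset_ground] at hX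
  exact fun e he hcl ↦ hX he (closure_subset_closure_of_isPersp hq (M'.isRkFinite_set _)
    (sdiff_subset.trans hXE) hcl)

theorem encard_image_inl_union_image_inr (X : Set α) (Z : Set β) :
    (Sum.inl '' X ∪ Sum.inr '' Z : Set (α ⊕ β)).encard = X.encard + Z.encard := by
  rw [encard_union_eq disjoint_image_inl_image_inr, Sum.inl_injective.encard_image,
    Sum.inr_injective.encard_image]

theorem encard_preimage_inl_add_encard_preimage_inr (S : Set (α ⊕ β)) :
    (Sum.inl ⁻¹' S).encard + (Sum.inr ⁻¹' S).encard = S.encard := by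
  rw [← encard_image_inl_union_image_inr, image_preimage_inl_union_image_preimage_inr]

theorem preimage_inl_insert_inl (e : α) (S : Set (α ⊕ β)) :
    Sum.inl ⁻¹' insert (Sum.inl e) S = insert e (Sum.inl ⁻¹' S) := by
  ext; simp

theorem preimage_inl_insert_inr (b : β) (S : Set (α ⊕ β)) :
    Sum.inl ⁻¹' insert (Sum.inr b) S = (Sum.inl ⁻¹' S : Set α) := by
  ext; simp

theorem exists_indep_preimage_inl_insert_of_encard_lt (hS : M.Indep (Sum.inl ⁻¹' S))
    (hT : M.Indep (Sum.inl ⁻¹' T)) (h : S.encard < T.encard) :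
    ∃ x ∈ T, x ∉ S ∧ M.Indep (Sum.inl ⁻¹' insert x S) := by
  by_cases hTS : (Sum.inr ⁻¹' T : Set β) ⊆ Sum.inr ⁻¹' S
  · have hlt : (Sum.inl ⁻¹' S : Set α).encard < (Sum.inl ⁻¹' T : Set α).encard := by
      by_contra! hle
      refine h.not_ge ?_
      rw [← encard_preimage_inl_add_encard_preimage_inr S,
        ← encard_preimage_inl_add_encard_preimage_inr T]
      gcongr
    obtain ⟨e, ⟨heT, heS⟩, he⟩ := hS.exists_insert_of_encard_lt hT hlt
    exact ⟨.inl e, heT, heS, by rwa [preimage_inl_insert_inl]⟩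
  · obtain ⟨b, hbT, hbS⟩ := not_subset.1 hTS
    exact ⟨.inr b, hbT, hbS, by rwa [preimage_inl_insert_inr]⟩

theorem natCast_toNat_eRank (M : Matroid α) [M.RankFinite] : (M.eRank.toNat : ℕ∞) = M.eRank :=
  ENat.natCast_toNat (M.eRank_ne_top_iff.2 ‹_›)

theorem eRank_add_card_eq_natCast (M : Matroid α) [M.RankFinite] (β : Type*) [Finite β] :
    M.eRank + ENat.card β = (M.eRank.toNat + Nat.card β : ℕ) := by
  rw [Nat.cast_add, natCast_toNat_eRank, ENat.card_eq_coe_natCard]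

/-- Independence in the major of the perspective `M → M'` whose extra elements form `β`. The
cardinality bound says that the nullity of `S ∩ E` in `M'` is at most the number of elements of `β`
outside `S`. -/
def MajorIndep (M M' : Matroid α) (S : Set (α ⊕ β)) : Prop :=
  M.Indep (Sum.inl ⁻¹' S) ∧ S.encard ≤ M'.eRk (Sum.inl ⁻¹' S) + ENat.card β

namespace MajorIndep

theorem empty (M M' : Matroid α) : MajorIndep M M' (∅ : Set (α ⊕ β)) := by
  simp [MajorIndep]

theorem subset_ground (hS : MajorIndep M M' S) : S ⊆ Sum.inl '' M.E ∪ Sum.inr '' univ := by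
  rintro (x | x) hx
  · exact .inl ⟨x, hS.1.subset_ground hx, rfl⟩
  · exact .inr ⟨x, mem_univ x, rfl⟩

theorem encard_le (hS : MajorIndep M M' S) : S.encard ≤ M'.eRank + ENat.card β :=
  hS.2.trans (by gcongr; exact M'.eRk_le_eRank _)

theorem finite [M'.RankFinite] [Finite β] (hS : MajorIndep M M' S) : S.Finite :=
  finite_of_encard_le_coe (hS.encard_le.trans_eq (eRank_add_card_eq_natCast M' β))

theorem subset (hT : MajorIndep M M' T) (hTfin : T.Finite) (hST : S ⊆ T) : MajorIndep M M' S := by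
  refine ⟨hT.1.subset (preimage_mono hST), ?_⟩
  have hrank : M'.eRk (Sum.inl ⁻¹' T) ≤ M'.eRk (Sum.inl ⁻¹' S) + (T \ S).encard :=
    calc M'.eRk (Sum.inl ⁻¹' T)
      _ ≤ M'.eRk (Sum.inl ⁻¹' S) + M'.eRk (Sum.inl ⁻¹' (T \ S)) :=
        M'.eRk_le_eRk_add_eRk_sdiff (preimage_mono hST)
      _ ≤ M'.eRk (Sum.inl ⁻¹' S) + (T \ S).encard := by
        gcongr
        exact (M'.eRk_le_encard _).trans
          (le_self_add.trans_eq (encard_preimage_inl_add_encard_preimage_inr _))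
  refine (ENat.add_le_add_iff_left (hTfin.sdiff (t := S)).encard_lt_top.ne).1 ?_
  calc (T \ S).encard + S.encard = T.encard := encard_sdiff_add_encard_of_subset hST
    _ ≤ M'.eRk (Sum.inl ⁻¹' T) + ENat.card β := hT.2
    _ ≤ M'.eRk (Sum.inl ⁻¹' S) + (T \ S).encard + ENat.card β := by gcongr
    _ = (T \ S).encard + (M'.eRk (Sum.inl ⁻¹' S) + ENat.card β) := by
      rw [add_comm (M'.eRk _), add_assoc]

theorem insert_of_encard_lt {x : α ⊕ β} (hS : S.encard < M'.eRk (Sum.inl ⁻¹' S) + ENat.card β)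
    (hx : M.Indep (Sum.inl ⁻¹' insert x S)) : MajorIndep M M' (insert x S) :=
  ⟨hx, calc
    (insert x S).encard ≤ S.encard + 1 := encard_insert_le S x
    _ ≤ M'.eRk (Sum.inl ⁻¹' S) + ENat.card β := Order.add_one_le_of_lt hS
    _ ≤ M'.eRk (Sum.inl ⁻¹' insert x S) + ENat.card β := by
      gcongr
      exact M'.eRk_mono (preimage_mono (subset_insert x S))⟩

theorem insert_inl_of_notMem_closure (hq : M.IsPersp M') (hS : MajorIndep M M' S)
    (hSfin : M'.IsRkFinite (Sum.inl ⁻¹' S)) (heE : e ∈ M.E)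
    (he : e ∉ M'.closure (Sum.inl ⁻¹' S)) : MajorIndep M M' (insert (Sum.inl e) S) := by
  have heM : e ∉ M.closure (Sum.inl ⁻¹' S) :=
    fun h ↦ he (closure_subset_closure_of_isPersp hq hSfin hS.1.subset_ground h)
  rw [MajorIndep, preimage_inl_insert_inl, Matroid.eRk_insert_eq_add_one ⟨hq.1 ▸ heE, he⟩]
  refine ⟨hS.1.insert_indep_iff.2 (.inl ⟨heE, heM⟩), (encard_insert_le S _).trans ?_⟩
  rw [add_right_comm]
  gcongr
  exact hS.2

theorem exists_insert_of_encard_lt [M'.RankFinite] (hq : M.IsPersp M')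
    (hS : MajorIndep M M' S) (hT : MajorIndep M M' T) (h : S.encard < T.encard) :
    ∃ x ∈ T, x ∉ S ∧ MajorIndep M M' (insert x S) := by
  obtain hlt | heq := hS.2.lt_or_eq
  · obtain ⟨x, hxT, hxS, hx⟩ := exists_indep_preimage_inl_insert_of_encard_lt hS.1 hT.1 h
    exact ⟨x, hxT, hxS, insert_of_encard_lt hlt hx⟩
  · have hr : M'.eRk (Sum.inl ⁻¹' S) < M'.eRk (Sum.inl ⁻¹' T) :=
      lt_of_add_lt_add_right ((heq ▸ h).trans_le hT.2)
    have hTS : ¬ (Sum.inl ⁻¹' T : Set α) ⊆ M'.closure (Sum.inl ⁻¹' S) :=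
      fun hsub ↦ hr.not_ge ((M'.eRk_mono hsub).trans_eq (M'.eRk_closure_eq _))
    obtain ⟨e, heT, he⟩ := not_subset.1 hTS
    have heS : Sum.inl e ∉ S :=
      fun hmem ↦ he (M'.mem_closure_of_mem' hmem (hq.1 ▸ hT.1.subset_ground heT))
    exact ⟨.inl e, heT, heS, insert_inl_of_notMem_closure hq hS (M'.isRkFinite_set _)
      (hT.1.subset_ground heT) he⟩

end MajorIndep

variable (β) in
/-- The major of the perspective `M → M'` with extra elements `β`: when `β` has at least
`r(M) - r(M')` elements, deleting them gives `M` and contracting them gives `M'`. -/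
def major [Finite β] [M'.RankFinite] (hq : M.IsPersp M') : Matroid (α ⊕ β) :=
  (IndepMatroid.ofBddAugment (Sum.inl '' M.E ∪ Sum.inr '' univ) (MajorIndep M M')
    (indep_empty := .empty M M')
    (indep_subset := fun _ _ hT ↦ hT.subset hT.finite)
    (indep_aug := fun _ _ hS hT ↦ hS.exists_insert_of_encard_lt hq hT)
    (indep_bdd := ⟨M'.eRank.toNat + Nat.card β, fun _ hS ↦
      hS.encard_le.trans_eq (eRank_add_card_eq_natCast M' β)⟩)
    (subset_ground := fun _ hS ↦ hS.subset_ground)).matroid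

section Major

variable [Finite β] [M'.RankFinite]

theorem major_ground (hq : M.IsPersp M') :
    (major β hq).E = Sum.inl '' M.E ∪ Sum.inr '' univ := rfl

theorem major_indep_iff (hq : M.IsPersp M') : (major β hq).Indep S ↔ MajorIndep M M' S := Iff.rfl

theorem major_ground_sdiff_inr (hq : M.IsPersp M') :
    (major β hq).E \ Sum.inr '' univ = Sum.inl '' M.E := by
  rw [major_ground]
  ext (x | x) <;> simp

theorem major_indep_image_inl_iff (hq : M.IsPersp M') (hβ : M.eRank ≤ M'.eRank + ENat.card β) :
    (major β hq).Indep (Sum.inl '' X) ↔ M.Indep X := by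
  rw [major_indep_iff, MajorIndep, preimage_image_eq X Sum.inl_injective,
    Sum.inl_injective.encard_image]
  refine and_iff_left_of_imp fun hX ↦ ?_
  rw [← hX.eRk_eq_encard]
  rw [ENat.card_eq_coe_natCard] at hβ ⊢
  exact eRk_le_eRk_add_of_isPersp hq hβ hX.subset_ground

theorem major_indep_image_inl_union_image_inr_iff (hq : M.IsPersp M') :
    (major β hq).Indep (Sum.inl '' X ∪ Sum.inr '' univ) ↔ M'.Indep X := by
  have hpre : Sum.inl ⁻¹' (Sum.inl '' X ∪ Sum.inr '' univ : Set (α ⊕ β)) = X := by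
    ext; simp
  rw [major_indep_iff, MajorIndep, hpre, encard_image_inl_union_image_inr, encard_univ,
    ENat.add_le_add_iff_right (ENat.card_lt_top.2 inferInstance).ne]
  exact ⟨fun h ↦ (M'.isRkFinite_set X).indep_of_encard_le_eRk h.2,
    fun h ↦ ⟨indep_of_isPersp hq h, h.eRk_eq_encard.ge⟩⟩

theorem major_delete_inr (hq : M.IsPersp M') (hβ : M.eRank ≤ M'.eRank + ENat.card β) :
    (major β hq).delete (Sum.inr '' univ) = M.map Sum.inl Sum.inl_injective.injOn := by
  refine Matroid.ext_indep (major_ground_sdiff_inr hq) fun I hI ↦ ?_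
  obtain ⟨X, hX, rfl⟩ := subset_image_iff.1 (hI.trans (major_ground_sdiff_inr hq).subset)
  rw [Matroid.delete_indep_iff, and_iff_left disjoint_image_inl_image_inr,
    major_indep_image_inl_iff hq hβ, Matroid.map_image_indep_iff hX]

theorem major_contract_inr (hq : M.IsPersp M') :
    (major β hq).contract (Sum.inr '' univ) = M'.map Sum.inl Sum.inl_injective.injOn := by
  have hindep : (major β hq).Indep (Sum.inr '' univ) := by
    simpa using (major_indep_image_inl_union_image_inr_iff hq).2 M'.empty_indep
  have hground : (major β hq).E \ Sum.inr '' univ = Sum.inl '' M'.E := by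
    rw [major_ground_sdiff_inr, hq.1]
  refine Matroid.ext_indep hground fun I hI ↦ ?_
  obtain ⟨X, hX, rfl⟩ := subset_image_iff.1 (hI.trans hground.subset)
  rw [hindep.contract_indep_iff, and_iff_right disjoint_image_inl_image_inr,
    major_indep_image_inl_union_image_inr_iff, Matroid.map_image_indep_iff hX]

end Major

end Perspective

theorem statement2_general {α β : Type*} [Finite β] (M M' : Matroid α) [M'.RankFinite]
    (hq : M.IsPersp M') (hβ : M.eRank ≤ M'.eRank + ENat.card β) :
    ∃ N : Matroid (α ⊕ β),
      N.E = (Sum.inl '' M.E) ∪ (Sum.inr '' Set.univ) ∧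
      N.delete' (Sum.inr '' Set.univ) = M.map Sum.inl Sum.inl_injective.injOn ∧
      N.contract' (Sum.inr '' Set.univ) = M'.map Sum.inl Sum.inl_injective.injOn :=
  ⟨major β hq, major_ground hq, (delete'_eq_delete _ _).trans (major_delete_inr hq hβ),
    (contract'_eq_contract _ _).trans (major_contract_inr hq)⟩

/-- every matroid perspective on a finite ground set factorizes: there are a
natural number `k` and a matroid `N` on `α ⊕ Fin k`, with ground set the union of the image
of `E` and of the extra elements, such that deleting the extra elements yields `M` and
contracting them yields `M'`. -/
theorem statement2 {α : Type*} (M M' : Matroid α) (hfin : M.E.Finite)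
    (hq : M.IsPersp M') :
    ∃ (k : ℕ) (N : Matroid (α ⊕ Fin k)),
      N.E = (Sum.inl '' M.E) ∪ (Sum.inr '' Set.univ) ∧
      N.delete' (Sum.inr '' Set.univ) = M.map Sum.inl Sum.inl_injective.injOn ∧
      N.contract' (Sum.inr '' Set.univ) = M'.map Sum.inl Sum.inl_injective.injOn := by
  have : M.Finite := ⟨hfin⟩
  have : M'.Finite := ⟨hq.1 ▸ hfin⟩
  exact ⟨M.eRank.toNat, statement2_general M M' hq (by simp [natCast_toNat_eRank])⟩
end

section
/- (Two alternate expansions of t(2,0) in terms of θ-activities, realizable case.) For every vector configuration v : Fin n → V: t(2,0) = ∑_{A ⊆ Fin n with θ̄*(A) = θ(A) = θ̄(A) = 0} 2^{θ*(A)} = ∑_{A ⊆ Fin n with θ*(A) = θ(A) = θ̄(A) = 0} 2^{θ̄*(A)}. -/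
open Set Submodule

/-- The reorientation of the vector configuration `v` on the subset `A`:
vectors indexed by `A` are negated. -/
def reorient {n : ℕ} {V : Type*} [AddCommGroup V] (v : Fin n → V) (A : Finset (Fin n)) :
    Fin n → V :=
  fun i => if i ∈ A then -v i else v i

/-- `a` is orientation-active for the configuration `w`: it is the smallest element of a
positive circuit, i.e. there is a nonnegative linear dependence with positive coefficient
at `a` and zero coefficients below `a`. -/
def OActive {n : ℕ} {V : Type*} [AddCommGroup V] [Module ℝ V]
    (w : Fin n → V) (a : Fin n) : Prop :=
  ∃ c : Fin n → ℝ, (∀ i, 0 ≤ c i) ∧ (∑ i, c i • w i) = 0 ∧ 0 < c a ∧ ∀ i < a, c i = 0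

/-- `a` is dually orientation-active for the configuration `w`: it is the smallest element of
a positive cocircuit, i.e. there is a linear functional, nonnegative on the configuration,
positive at `w a` and vanishing on the vectors below `a`. -/
def ODualActive {n : ℕ} {V : Type*} [AddCommGroup V] [Module ℝ V]
    (w : Fin n → V) (a : Fin n) : Prop :=
  ∃ f : V →ₗ[ℝ] ℝ, (∀ i, 0 ≤ f (w i)) ∧ 0 < f (w a) ∧ ∀ i < a, f (w i) = 0

/-- `θ*(A)`: the number of elements outside `A` that are dually orientation-active for `v_A`. -/
noncomputable def thetaStar {n : ℕ} {V : Type*} [AddCommGroup V] [Module ℝ V]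
    (v : Fin n → V) (A : Finset (Fin n)) : ℕ :=
  {a : Fin n | a ∉ A ∧ ODualActive (reorient v A) a}.ncard

/-- `θ̄*(A)`: the number of elements of `A` that are dually orientation-active for `v_A`. -/
noncomputable def thetaStarBar {n : ℕ} {V : Type*} [AddCommGroup V] [Module ℝ V]
    (v : Fin n → V) (A : Finset (Fin n)) : ℕ :=
  {a : Fin n | a ∈ A ∧ ODualActive (reorient v A) a}.ncard

/-- `θ(A)`: the number of elements outside `A` that are orientation-active for `v_A`. -/
noncomputable def theta {n : ℕ} {V : Type*} [AddCommGroup V] [Module ℝ V]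
    (v : Fin n → V) (A : Finset (Fin n)) : ℕ :=
  {a : Fin n | a ∉ A ∧ OActive (reorient v A) a}.ncard

/-- `θ̄(A)`: the number of elements of `A` that are orientation-active for `v_A`. -/
noncomputable def thetaBar {n : ℕ} {V : Type*} [AddCommGroup V] [Module ℝ V]
    (v : Fin n → V) (A : Finset (Fin n)) : ℕ :=
  {a : Fin n | a ∈ A ∧ OActive (reorient v A) a}.ncard

/-- The rank of a set of indices: the dimension of the span of the corresponding vectors. -/
noncomputable def vrank {n : ℕ} {V : Type*} [AddCommGroup V] [Module ℝ V]
    (v : Fin n → V) (S : Set (Fin n)) : ℕ :=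
  Module.finrank ℝ ↥(span ℝ (v '' S))

/-- The Tutte polynomial of the matroid realized by the configuration `v`:
`t(x,y) = ∑_{A ⊆ Fin n} (x-1)^(r(E) - r(A)) * (y-1)^(|A| - r(A))`. -/
noncomputable def tutteV {n : ℕ} {V : Type*} [AddCommGroup V] [Module ℝ V]
    (v : Fin n → V) (x y : ℝ) : ℝ :=
  ∑ A : Finset (Fin n),
    (x - 1) ^ (vrank v Set.univ - vrank v ↑A) * (y - 1) ^ (A.card - vrank v ↑A)

/-!
For reorientations without positive circuits, mark each dually active element `a` of `v_A` by `y` if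
`a ∈ A` and by `x` otherwise, and let `T v` be the sum of the resulting monomials over `A`. Then
`T v = t(x + y, 0)`, because `T` satisfies the deletion–contraction recursion for the last vector
`u`, and the two expansions of `t(2, 0)` are the cases `(x, y) = (2, 0)` and `(0, 2)`.

A loop creates a positive circuit, so it gives `0`. A coloop never affects the other vectors and is
always dually active, so it gives the factor `x + y`. Otherwise `u` itself is never dually active,
and one compares the configurations `(w, u)` and `(w, -u)`. All relevant functionals form convex
cones, on which `u` takes the value `0` as soon as it takes values of both signs. Hence `w` is
acyclic iff one of the two is, and its contraction `w/u` iff both are; the dually active sets of `w`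
and `w/u` are the union and the intersection of those of the two extensions. The same convexity
argument shows that these two sets are nested, so the pair (union, intersection) is a rearrangement
of them and the weights of the extensions add up to those of `w` and `w/u`.
-/

section Functionals

variable {ι V : Type*} [AddCommGroup V] [Module ℝ V] {n : ℕ}

/-- The cone of functionals that are positive on every vector of `w`. -/
def acyclicCone (w : ι → V) : ConvexCone ℝ (Module.Dual ℝ V) where
  carrier := {f | ∀ i, 0 < f (w i)}
  smul_mem' _ hc _ hf i := mul_pos hc (hf i)
  add_mem' _ hf _ hg i := add_pos (hf i) (hg i)

/-- Acyclicity of the oriented matroid realized by `w`, encoded as the existence of a functional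
positive on every vector; `isAcyclic_iff_forall_not_oActive` is the usual form, that there is no
positive circuit. -/
def IsAcyclic (w : ι → V) : Prop :=
  ∃ f, f ∈ acyclicCone w

/-- The cone of functionals witnessing that `a` is dually orientation-active for `w`. -/
def dualActiveCone (w : Fin n → V) (a : Fin n) : ConvexCone ℝ (Module.Dual ℝ V) where
  carrier := {f | (∀ i, 0 ≤ f (w i)) ∧ 0 < f (w a) ∧ ∀ i < a, f (w i) = 0}
  smul_mem' c hc f hf :=
    ⟨fun i => mul_nonneg hc.le (hf.1 i), mul_pos hc hf.2.1, fun i hi => by simp [hf.2.2 i hi]⟩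
  add_mem' f hf g hg :=
    ⟨fun i => add_nonneg (hf.1 i) (hg.1 i), add_pos hf.2.1 hg.2.1,
      fun i hi => by simp [hf.2.2 i hi, hg.2.2 i hi]⟩

/-- The set of elements that are dually orientation-active for `w`. -/
def dualActiveSet (w : Fin n → V) : Set (Fin n) :=
  {a | ODualActive w a}

/-- The elements of `w` that remain dually orientation-active when `u` is appended to `w`. -/
def extendedDualActiveSet (w : Fin n → V) (u : V) : Set (Fin n) :=
  {a | ∃ f ∈ dualActiveCone w a, 0 ≤ f u}

/-- The contraction of `w` by the vector `u`, realized in the quotient by the line of `u`. -/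
def contraction (w : ι → V) (u : V) : ι → V ⧸ span ℝ {u} :=
  fun i => (span ℝ {u}).mkQ (w i)

theorem add_mem_dualActiveCone_of_le {w : Fin n → V} {a b : Fin n} (hab : a ≤ b)
    {f g : Module.Dual ℝ V} (hf : f ∈ dualActiveCone w a) (hg : g ∈ dualActiveCone w b) :
    f + g ∈ dualActiveCone w a :=
  ⟨fun i => add_nonneg (hf.1 i) (hg.1 i), add_pos_of_pos_of_nonneg hf.2.1 (hg.1 a),
    fun i hi => by simp [hf.2.2 i hi, hg.2.2 i (hi.trans_le hab)]⟩

theorem add_mem_acyclicCone {w : Fin n → V} {a : Fin n} {f g : Module.Dual ℝ V}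
    (hf : f ∈ acyclicCone w) (hg : g ∈ dualActiveCone w a) : f + g ∈ acyclicCone w :=
  fun i => add_pos_of_pos_of_nonneg (hf i) (hg.1 i)

theorem exists_mem_apply_eq_zero_or {K L : ConvexCone ℝ (Module.Dual ℝ V)}
    (hKL : ∀ f ∈ K, ∀ g ∈ L, f + g ∈ K) {u : V} (hK : ∃ f ∈ K, 0 ≤ f u)
    (hL : ∃ g ∈ L, 0 ≤ g (-u)) : (∃ f ∈ K, f u = 0) ∨ ∃ g ∈ L, g u = 0 := by
  obtain ⟨f, hf, hfu⟩ := hK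
  obtain ⟨g, hg, hgu⟩ := hL
  rcases hfu.eq_or_lt with hfu | hfu
  · exact Or.inl ⟨f, hf, hfu.symm⟩
  rcases hgu.eq_or_lt with hgu | hgu
  · exact Or.inr ⟨g, hg, by simpa using hgu⟩
  refine Or.inl ⟨g (-u) • f + f u • g,
    hKL _ (K.smul_mem hgu hf) _ (L.smul_mem hfu hg), ?_⟩
  simp only [LinearMap.add_apply, LinearMap.smul_apply, map_neg, smul_eq_mul]
  ring

theorem exists_mem_apply_eq_zero_iff (K : ConvexCone ℝ (Module.Dual ℝ V)) (u : V) :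
    (∃ f ∈ K, f u = 0) ↔ (∃ f ∈ K, 0 ≤ f u) ∧ ∃ f ∈ K, 0 ≤ f (-u) := by
  constructor
  · rintro ⟨f, hf, hfu⟩
    exact ⟨⟨f, hf, hfu.ge⟩, f, hf, by simp [hfu]⟩
  · rintro ⟨hpos, hneg⟩
    exact or_self_iff.1
      (exists_mem_apply_eq_zero_or (fun _ hf _ hg => K.add_mem hf hg) hpos hneg)

theorem exists_mem_iff_nonneg_or (K : ConvexCone ℝ (Module.Dual ℝ V)) (u : V) :
    (∃ f, f ∈ K) ↔ (∃ f ∈ K, 0 ≤ f u) ∨ ∃ f ∈ K, 0 ≤ f (-u) := by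
  constructor
  · rintro ⟨f, hf⟩
    rcases le_total 0 (f u) with hfu | hfu
    · exact Or.inl ⟨f, hf, hfu⟩
    · exact Or.inr ⟨f, hf, by simpa using hfu⟩
  · rintro (⟨f, hf, -⟩ | ⟨f, hf, -⟩) <;> exact ⟨f, hf⟩

theorem exists_dual_quotient_span_iff {u : V} (p : Module.Dual ℝ V → Prop) :
    (∃ f : Module.Dual ℝ (V ⧸ span ℝ {u}), p (f ∘ₗ (span ℝ {u}).mkQ)) ↔
      ∃ f, p f ∧ f u = 0 := by
  constructor
  · rintro ⟨f, hf⟩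
    have hu : (span ℝ {u}).mkQ u = 0 := by simp [mem_span_singleton_self]
    exact ⟨_, hf, by rw [LinearMap.comp_apply, hu, map_zero]⟩
  · rintro ⟨f, hf, hfu⟩
    have hle : span ℝ {u} ≤ LinearMap.ker f := by
      rwa [span_singleton_le_iff_mem]
    exact ⟨(span ℝ {u}).liftQ f hle, by rwa [liftQ_mkQ]⟩

theorem isAcyclic_contraction_iff {w : ι → V} {u : V} :
    IsAcyclic (contraction w u) ↔ ∃ f ∈ acyclicCone w, f u = 0 :=
  exists_dual_quotient_span_iff (· ∈ acyclicCone w)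

theorem oDualActive_contraction_iff {w : Fin n → V} {u : V} {a : Fin n} :
    ODualActive (contraction w u) a ↔ ∃ f ∈ dualActiveCone w a, f u = 0 :=
  exists_dual_quotient_span_iff (· ∈ dualActiveCone w a)

theorem exists_mem_acyclicCone_pos_iff [Finite ι] {w : ι → V} {u : V} (hu : u ≠ 0) :
    (∃ f ∈ acyclicCone w, 0 < f u) ↔ ∃ f ∈ acyclicCone w, 0 ≤ f u := by
  refine ⟨fun ⟨f, hf, hfu⟩ => ⟨f, hf, hfu.le⟩, fun ⟨f, hf, hfu⟩ => ?_⟩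
  obtain ⟨g, -, hgu⟩ :=
    LinearMap.exists_extend_of_notMem (0 : (⊥ : Submodule ℝ V) →ₗ[ℝ] ℝ) (by simpa using hu) 1
  have hsmall : ∀ᶠ ε : ℝ in nhdsWithin 0 (Ioi 0), ∀ i, 0 < f (w i) + ε * g (w i) := by
    refine Filter.eventually_all.2 fun i => Filter.Eventually.filter_mono nhdsWithin_le_nhds ?_
    have hcont : ContinuousAt (fun ε : ℝ => f (w i) + ε * g (w i)) 0 := by fun_prop
    exact hcont.eventually (lt_mem_nhds (by simpa using hf i))
  obtain ⟨ε, hε, hεpos : 0 < ε⟩ := (hsmall.and self_mem_nhdsWithin).exists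
  exact ⟨f + ε • g, hε, by simpa [hgu] using add_pos_of_nonneg_of_pos hfu hεpos⟩

theorem isAcyclic_snoc_iff {w : Fin n → V} {u : V} :
    IsAcyclic (Fin.snoc w u : Fin (n + 1) → V) ↔ ∃ f ∈ acyclicCone w, 0 < f u := by
  simp [IsAcyclic, acyclicCone, Fin.forall_fin_succ']

theorem isAcyclic_snoc_iff_nonneg {w : Fin n → V} {u : V} (hu : u ≠ 0) :
    IsAcyclic (Fin.snoc w u : Fin (n + 1) → V) ↔ ∃ f ∈ acyclicCone w, 0 ≤ f u :=
  isAcyclic_snoc_iff.trans (exists_mem_acyclicCone_pos_iff hu)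

theorem oDualActive_snoc_castSucc_iff {w : Fin n → V} {u : V} {a : Fin n} :
    ODualActive (Fin.snoc w u : Fin (n + 1) → V) a.castSucc ↔ a ∈ extendedDualActiveSet w u := by
  have hlast : ¬ Fin.last n < a.castSucc := (Fin.castSucc_lt_last a).not_gt
  simp only [ODualActive, extendedDualActiveSet, dualActiveCone, Fin.forall_fin_succ',
    Fin.snoc_castSucc, Fin.snoc_last, Fin.castSucc_lt_castSucc_iff, hlast, false_imp_iff, and_true,
    mem_ofPred_eq, ConvexCone.mem_mk]
  exact exists_congr fun f => and_right_comm

theorem isAcyclic_iff_snoc_or {w : Fin n → V} {u : V} (hu : u ≠ 0) :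
    IsAcyclic w ↔ IsAcyclic (Fin.snoc w u : Fin (n + 1) → V) ∨
      IsAcyclic (Fin.snoc w (-u) : Fin (n + 1) → V) := by
  rw [isAcyclic_snoc_iff_nonneg hu, isAcyclic_snoc_iff_nonneg (neg_ne_zero.2 hu)]
  exact exists_mem_iff_nonneg_or _ u

theorem isAcyclic_contraction_iff_snoc_and {w : Fin n → V} {u : V} (hu : u ≠ 0) :
    IsAcyclic (contraction w u) ↔ IsAcyclic (Fin.snoc w u : Fin (n + 1) → V) ∧
      IsAcyclic (Fin.snoc w (-u) : Fin (n + 1) → V) := by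
  rw [isAcyclic_snoc_iff_nonneg hu, isAcyclic_snoc_iff_nonneg (neg_ne_zero.2 hu),
    isAcyclic_contraction_iff, exists_mem_apply_eq_zero_iff]

theorem dualActiveSet_eq_union (w : Fin n → V) (u : V) :
    dualActiveSet w = extendedDualActiveSet w u ∪ extendedDualActiveSet w (-u) :=
  Set.ext fun a => exists_mem_iff_nonneg_or (dualActiveCone w a) u

theorem dualActiveSet_contraction_eq_inter (w : Fin n → V) (u : V) :
    dualActiveSet (contraction w u) =
      extendedDualActiveSet w u ∩ extendedDualActiveSet w (-u) :=
  Set.ext fun a => oDualActive_contraction_iff.trans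
    (exists_mem_apply_eq_zero_iff (dualActiveCone w a) u)

theorem mem_extendedDualActiveSet_neg_or {w : Fin n → V} {u : V} {a b : Fin n} (hab : a ≤ b)
    (ha : a ∈ extendedDualActiveSet w u) (hb : b ∈ extendedDualActiveSet w (-u)) :
    a ∈ extendedDualActiveSet w (-u) ∨ b ∈ extendedDualActiveSet w u := by
  refine (exists_mem_apply_eq_zero_or (fun f hf g hg => add_mem_dualActiveCone_of_le hab hf hg)
    ha hb).imp ?_ ?_
  · exact fun h => ((exists_mem_apply_eq_zero_iff _ u).1 h).2
  · exact fun h => ((exists_mem_apply_eq_zero_iff _ u).1 h).1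

theorem extendedDualActiveSet_subset_total (w : Fin n → V) (u : V) :
    extendedDualActiveSet w u ⊆ extendedDualActiveSet w (-u) ∨
      extendedDualActiveSet w (-u) ⊆ extendedDualActiveSet w u := by
  by_contra! h
  obtain ⟨⟨a, ha, ha'⟩, b, hb, hb'⟩ := h.imp not_subset.1 not_subset.1
  rcases le_total a b with hab | hba
  · exact (mem_extendedDualActiveSet_neg_or hab ha hb).elim ha' hb'
  · have h := mem_extendedDualActiveSet_neg_or hba hb (by rwa [neg_neg])
    rw [neg_neg] at h
    exact h.elim hb' ha'

theorem extendedDualActiveSet_neg_subset {w : Fin n → V} {u : V} (hu : u ≠ 0)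
    (hpos : IsAcyclic (Fin.snoc w u : Fin (n + 1) → V))
    (hneg : ¬ IsAcyclic (Fin.snoc w (-u) : Fin (n + 1) → V)) :
    extendedDualActiveSet w (-u) ⊆ extendedDualActiveSet w u := by
  intro a ha
  rw [isAcyclic_snoc_iff_nonneg hu] at hpos
  rcases exists_mem_apply_eq_zero_or (fun f hf g hg => add_mem_acyclicCone hf hg) hpos ha with h | h
  · exact absurd ((isAcyclic_contraction_iff_snoc_and hu).1 (isAcyclic_contraction_iff.2 h)).2 hneg
  · exact ((exists_mem_apply_eq_zero_iff _ u).1 h).1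

theorem exists_dual_eq_on_apply_eq {w : ι → V} {u : V} (hu : u ∉ span ℝ (range w))
    (f : Module.Dual ℝ V) (t : ℝ) : ∃ g : Module.Dual ℝ V, (∀ i, g (w i) = f (w i)) ∧ g u = t := by
  obtain ⟨g, hg, hgu⟩ := LinearMap.exists_extend_of_notMem (f.domRestrict _) hu t
  exact ⟨g, fun i => LinearMap.congr_fun hg ⟨w i, subset_span (mem_range_self i)⟩, hgu⟩

theorem isAcyclic_snoc_iff_of_notMem_span {w : Fin n → V} {u : V}
    (hu : u ∉ span ℝ (range w)) :
    IsAcyclic (Fin.snoc w u : Fin (n + 1) → V) ↔ IsAcyclic w := by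
  rw [isAcyclic_snoc_iff]
  refine ⟨fun ⟨f, hf, _⟩ => ⟨f, hf⟩, fun ⟨f, hf⟩ => ?_⟩
  obtain ⟨g, hg, hgu⟩ := exists_dual_eq_on_apply_eq hu f 1
  exact ⟨g, fun i => (hf i).trans_eq (hg i).symm, hgu ▸ one_pos⟩

theorem extendedDualActiveSet_of_notMem_span {w : Fin n → V} {u : V}
    (hu : u ∉ span ℝ (range w)) : extendedDualActiveSet w u = dualActiveSet w := by
  refine Set.ext fun a => ⟨fun ⟨f, hf, _⟩ => ⟨f, hf⟩, fun ⟨f, hf⟩ => ?_⟩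
  obtain ⟨g, hg, hgu⟩ := exists_dual_eq_on_apply_eq hu f 0
  exact ⟨g, by simpa [dualActiveCone, hg] using hf, hgu.ge⟩

theorem oDualActive_snoc_last_iff {w : Fin n → V} {u : V} :
    ODualActive (Fin.snoc w u : Fin (n + 1) → V) (Fin.last n) ↔ u ∉ span ℝ (range w) := by
  constructor
  · rintro ⟨f, -, hfu, hfw⟩ hu
    have hle : span ℝ (range w) ≤ LinearMap.ker f := by
      rw [span_le, range_subset_iff]
      exact fun i => by simpa using hfw i.castSucc (Fin.castSucc_lt_last i)
    rw [Fin.snoc_last, LinearMap.mem_ker.1 (hle hu)] at hfu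
    exact lt_irrefl 0 hfu
  · intro hu
    obtain ⟨f, hf, hfu⟩ := exists_dual_eq_on_apply_eq hu 0 1
    exact ⟨f, by simp [Fin.forall_fin_succ', hf, hfu]⟩

end Functionals

section Gordan

variable {V : Type*} [AddCommGroup V] [Module ℝ V] {n : ℕ}

theorem IsAcyclic.eq_zero_of_sum_smul_eq_zero {ι : Type*} [Fintype ι] {w : ι → V}
    (hw : IsAcyclic w) {c : ι → ℝ} (hc : 0 ≤ c) (hsum : ∑ i, c i • w i = 0) : c = 0 := by
  obtain ⟨f, hf⟩ := hw
  have hfsum : ∑ i, c i * f (w i) = 0 := by simpa using congrArg f hsum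
  rw [Finset.sum_eq_zero_iff_of_nonneg fun i _ => mul_nonneg (hc i) (hf i).le] at hfsum
  exact funext fun i => (mul_eq_zero.1 (hfsum i (Finset.mem_univ i))).resolve_right (hf i).ne'

/-- Gordan's theorem. A functional positive on all but the last vector `u`, and negative at `u`, is
replaced by one vanishing at `u`, obtained from the contraction by `u`. -/
theorem isAcyclic_of_forall_sum_smul_eq_zero (w : Fin n → V)
    (hw : ∀ c : Fin n → ℝ, 0 ≤ c → ∑ i, c i • w i = 0 → c = 0) : IsAcyclic w := by
  induction n generalizing V with
  | zero => exact ⟨0, fun i => i.elim0⟩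
  | succ n ih =>
    obtain ⟨w, u, rfl⟩ : ∃ w' u, w = Fin.snoc w' u := ⟨_, _, (Fin.snoc_init_self w).symm⟩
    have hpair : ∀ (c : Fin n → ℝ) (t : ℝ), 0 ≤ c → 0 ≤ t → ∑ i, c i • w i + t • u = 0 →
        c = 0 ∧ t = 0 := by
      intro c t hc ht hsum
      have h := hw (Fin.snoc c t) (Fin.forall_fin_succ'.2 (by simpa [ht] using Pi.le_def.1 hc))
        (by simpa [Fin.sum_univ_castSucc] using hsum)
      simpa [funext_iff, Fin.forall_fin_succ'] using h
    have hu : u ≠ 0 := by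
      rintro rfl
      simpa using (hpair 0 1 le_rfl zero_le_one (by simp)).2
    obtain ⟨f, hf⟩ := ih w fun c hc hsum => (hpair c 0 hc le_rfl (by simpa using hsum)).1
    rw [isAcyclic_snoc_iff_nonneg hu]
    rcases le_or_gt 0 (f u) with hfu | hfu
    · exact ⟨f, hf, hfu⟩
    suffices hcontr : IsAcyclic (contraction w u) by
      obtain ⟨g, hg, hgu⟩ := isAcyclic_contraction_iff.1 hcontr
      exact ⟨g, hg, hgu.ge⟩
    refine ih _ fun c hc hsum => ?_
    have hmem : ∑ i, c i • w i ∈ span ℝ {u} := by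
      rw [← Quotient.mk_eq_zero, ← mkQ_apply]
      simpa [contraction] using hsum
    obtain ⟨r, hr⟩ := mem_span_singleton.1 hmem
    have hr_nonpos : r ≤ 0 := by
      have hfr : r * f u = ∑ i, c i * f (w i) := by simpa using congrArg f hr
      have hnonneg : 0 ≤ r * f u :=
        hfr ▸ Finset.sum_nonneg fun i _ => mul_nonneg (hc i) (hf i).le
      exact nonpos_of_mul_nonneg_left hnonneg hfu
    exact (hpair c (-r) hc (neg_nonneg.2 hr_nonpos) (by simp [hr])).1

theorem isAcyclic_iff_forall_not_oActive {w : Fin n → V} :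
    IsAcyclic w ↔ ∀ a, ¬ OActive w a := by
  constructor
  · rintro hw a ⟨c, hc, hsum, hca, -⟩
    exact hca.ne' (congrFun (hw.eq_zero_of_sum_smul_eq_zero hc hsum) a)
  · refine fun hw => isAcyclic_of_forall_sum_smul_eq_zero w fun c hc hsum => ?_
    by_contra hne
    obtain ⟨a, ha, hmin⟩ := wellFounded_lt.has_min {i | c i ≠ 0} (Function.ne_iff.1 hne)
    exact hw a ⟨c, hc, hsum, (hc a).lt_of_ne' ha, fun i hi => not_not.1 fun hi' => hmin i hi' hi⟩

end Gordan

section ActivityWeight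

variable {R V : Type*} [CommSemiring R] [AddCommGroup V] [Module ℝ V] {n : ℕ}

open Classical in
/-- The product of the parameters `c a` over the dually orientation-active elements `a` of `w` if
`w` is acyclic, and `0` otherwise. -/
noncomputable def activityWeight (c : Fin n → R) (w : Fin n → V) : R :=
  if IsAcyclic w then ∏ a, (dualActiveSet w).mulIndicator c a else 0

theorem activityWeight_snoc_zero (c : Fin (n + 1) → R) (w : Fin n → V) :
    activityWeight c (Fin.snoc w 0 : Fin (n + 1) → V) = 0 := by
  refine if_neg fun h => ?_
  obtain ⟨f, -, hf⟩ := isAcyclic_snoc_iff.1 h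
  simp at hf

theorem prod_mulIndicator_dualActiveSet_snoc (c : Fin n → R) (t : R) (w : Fin n → V) (u : V) :
    ∏ a, (dualActiveSet (Fin.snoc w u : Fin (n + 1) → V)).mulIndicator
        (Fin.snoc c t : Fin (n + 1) → R) a =
      (∏ a, (extendedDualActiveSet w u).mulIndicator c a) *
        {s | s ∉ span ℝ (range w)}.mulIndicator (fun _ => t) u := by
  classical
  simp [Fin.prod_univ_castSucc, Set.mulIndicator_apply, dualActiveSet,
    oDualActive_snoc_castSucc_iff, oDualActive_snoc_last_iff]

theorem activityWeight_snoc_of_notMem_span {w : Fin n → V} {u : V}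
    (hu : u ∉ span ℝ (range w)) (c : Fin n → R) (t : R) :
    activityWeight (Fin.snoc c t : Fin (n + 1) → R) (Fin.snoc w u : Fin (n + 1) → V) =
      t * activityWeight c w := by
  have hiff := isAcyclic_snoc_iff_of_notMem_span hu
  simp only [activityWeight, prod_mulIndicator_dualActiveSet_snoc,
    extendedDualActiveSet_of_notMem_span hu]
  by_cases hw : IsAcyclic w <;> simp [hiff, hw, hu, mul_comm]

open Classical in
theorem activityWeight_snoc_of_mem_span {w : Fin n → V} {u : V}
    (hu : u ∈ span ℝ (range w)) (c : Fin n → R) (t : R) :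
    activityWeight (Fin.snoc c t : Fin (n + 1) → R) (Fin.snoc w u : Fin (n + 1) → V) =
      if IsAcyclic (Fin.snoc w u : Fin (n + 1) → V) then
        ∏ a, (extendedDualActiveSet w u).mulIndicator c a
      else 0 := by
  simp only [activityWeight, prod_mulIndicator_dualActiveSet_snoc]
  simp [hu]

open Classical in
theorem ite_add_ite_eq_ite_union_add_ite_inter {α : Type*} (F : Set α → R) {P Q : Prop}
    {D E : Set α} (htotal : D ⊆ E ∨ E ⊆ D) (hP : P → ¬ Q → E ⊆ D) (hQ : Q → ¬ P → D ⊆ E) :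
    (if P then F D else 0) + (if Q then F E else 0) =
      (if P ∨ Q then F (D ∪ E) else 0) + if P ∧ Q then F (D ∩ E) else 0 := by
  by_cases p : P <;> by_cases q : Q
  · rcases htotal with h | h
    · simp [p, q, union_eq_right.2 h, inter_eq_left.2 h, add_comm]
    · simp [p, q, union_eq_left.2 h, inter_eq_right.2 h]
  · simp [p, q, union_eq_left.2 (hP p q)]
  · simp [p, q, union_eq_right.2 (hQ q p)]
  · simp [p, q]

theorem activityWeight_snoc_add_activityWeight_snoc_neg {w : Fin n → V} {u : V} (hu : u ≠ 0)
    (huw : u ∈ span ℝ (range w)) (c : Fin n → R) (s t : R) :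
    activityWeight (Fin.snoc c s : Fin (n + 1) → R) (Fin.snoc w u : Fin (n + 1) → V) +
        activityWeight (Fin.snoc c t : Fin (n + 1) → R) (Fin.snoc w (-u) : Fin (n + 1) → V) =
      activityWeight c w + activityWeight c (contraction w u) := by
  classical
  rw [activityWeight_snoc_of_mem_span huw, activityWeight_snoc_of_mem_span (neg_mem huw),
    ite_add_ite_eq_ite_union_add_ite_inter (fun D => ∏ a, D.mulIndicator c a)
      (extendedDualActiveSet_subset_total w u) (extendedDualActiveSet_neg_subset hu),
    ← dualActiveSet_eq_union, ← dualActiveSet_contraction_eq_inter]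
  · simp only [activityWeight, ← isAcyclic_iff_snoc_or hu, ← isAcyclic_contraction_iff_snoc_and hu]
  · simpa only [neg_neg] using extendedDualActiveSet_neg_subset (w := w) (neg_ne_zero.2 hu)

end ActivityWeight

section FinsetSums

theorem sum_filter_mul_zero_pow {ι R : Type*} [Fintype ι] [Semiring R] (p : ι → Prop)
    [DecidablePred p] (f : ι → R) (k : ι → ℕ) :
    ∑ i ∈ Finset.univ.filter p, f i * 0 ^ k i =
      ∑ i ∈ Finset.univ.filter (fun i => k i = 0 ∧ p i), f i := by
  simp only [zero_pow_eq, mul_ite, mul_one, mul_zero, Finset.sum_ite, Finset.sum_const_zero,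
    add_zero, Finset.filter_filter, and_comm]

variable {n : ℕ}

theorem sum_finset_fin_succ {M : Type*} [AddCommMonoid M] (F : Finset (Fin (n + 1)) → M) :
    ∑ A, F A = ∑ B : Finset (Fin n), (F (B.map Fin.castSuccEmb) +
      F (insert (Fin.last n) (B.map Fin.castSuccEmb))) := by
  have hpowerset : (Finset.univ.map Fin.castSuccEmb : Finset (Fin (n + 1))).powerset =
      (Finset.univ : Finset (Finset (Fin n))).map
        (Finset.mapEmbedding Fin.castSuccEmb).toEmbedding := by
    ext A
    simp [Finset.subset_map_iff, eq_comm]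
  rw [← Finset.powerset_univ, Fin.univ_castSuccEmb, Finset.cons_eq_insert,
    Finset.sum_powerset_insert (by simp), hpowerset, Finset.sum_map, Finset.sum_map,
    ← Finset.sum_add_distrib]
  rfl

theorem piecewise_map_castSuccEmb {α : Type*} (B : Finset (Fin n)) (f g : Fin (n + 1) → α) :
    (B.map Fin.castSuccEmb).piecewise f g =
      (Fin.snoc (B.piecewise (Fin.init f) (Fin.init g)) (g (Fin.last n)) : Fin (n + 1) → α) := by
  funext i
  refine Fin.lastCases ?_ (fun i => ?_) i <;> simp [Finset.piecewise, Fin.init]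

theorem piecewise_insert_last_map_castSuccEmb {α : Type*} (B : Finset (Fin n))
    (f g : Fin (n + 1) → α) :
    (insert (Fin.last n) (B.map Fin.castSuccEmb)).piecewise f g =
      (Fin.snoc (B.piecewise (Fin.init f) (Fin.init g)) (f (Fin.last n)) : Fin (n + 1) → α) := by
  funext i
  refine Fin.lastCases ?_ (fun i => ?_) i <;> simp [Finset.piecewise, Fin.init]

end FinsetSums

section Reorient

variable {V : Type*} [AddCommGroup V] {n : ℕ}

theorem reorient_snoc_map_castSuccEmb (w : Fin n → V) (u : V) (B : Finset (Fin n)) :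
    reorient (Fin.snoc w u : Fin (n + 1) → V) (B.map Fin.castSuccEmb) =
      (Fin.snoc (reorient w B) u : Fin (n + 1) → V) := by
  funext i
  refine Fin.lastCases ?_ (fun i => ?_) i <;> simp [reorient]

theorem reorient_snoc_insert_last (w : Fin n → V) (u : V) (B : Finset (Fin n)) :
    reorient (Fin.snoc w u : Fin (n + 1) → V) (insert (Fin.last n) (B.map Fin.castSuccEmb)) =
      (Fin.snoc (reorient w B) (-u) : Fin (n + 1) → V) := by
  funext i
  refine Fin.lastCases ?_ (fun i => ?_) i <;> simp [reorient]

variable [Module ℝ V]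

theorem contraction_reorient (w : Fin n → V) (u : V) (B : Finset (Fin n)) :
    contraction (reorient w B) u = reorient (contraction w u) B := by
  funext i
  simp only [contraction, reorient, apply_ite (span ℝ {u}).mkQ, map_neg]

theorem span_range_reorient (w : Fin n → V) (B : Finset (Fin n)) :
    span ℝ (range (reorient w B)) = span ℝ (range w) := by
  have hle : ∀ w : Fin n → V, span ℝ (range (reorient w B)) ≤ span ℝ (range w) := by
    refine fun w => span_le.2 (range_subset_iff.2 fun i => ?_)
    have hi : w i ∈ span ℝ (range w) := subset_span (mem_range_self i)
    simp only [reorient]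
    split_ifs
    exacts [neg_mem hi, hi]
  refine (hle w).antisymm ?_
  have hinvol : reorient (reorient w B) B = w := by
    funext i
    by_cases hi : i ∈ B <;> simp [reorient, hi]
  simpa only [hinvol] using hle (reorient w B)

end Reorient

section Finrank

variable {K V : Type*} [DivisionRing K] [AddCommGroup V] [Module K V]

theorem finrank_map_mkQ_add_finrank (p S : Submodule K V) [FiniteDimensional K S] (h : p ≤ S) :
    Module.finrank K (S.map p.mkQ) + Module.finrank K p = Module.finrank K S := by
  rw [← LinearMap.finrank_range_add_finrank_ker (p.mkQ.domRestrict S), LinearMap.range_domRestrict,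
    LinearMap.ker_domRestrict, ker_mkQ]
  congr 1
  exact (submoduleOfEquivOfLe h).finrank_eq.symm

theorem finrank_sup_span_singleton_of_notMem (S : Submodule K V) [FiniteDimensional K S] {u : V}
    (hu : u ∉ S) : Module.finrank K ↥(S ⊔ span K {u}) = Module.finrank K S + 1 := by
  have hu0 : u ≠ 0 := fun h => hu (h ▸ S.zero_mem)
  have hdisj : Disjoint S (span K {u}) := (disjoint_span_singleton' hu0).2 hu
  have h := finrank_sup_add_finrank_inf_eq S (span K {u})
  rwa [hdisj.eq_bot, finrank_bot, add_zero, finrank_span_singleton hu0] at h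

end Finrank

section Tutte

variable {V : Type*} [AddCommGroup V] [Module ℝ V] {n : ℕ}

theorem vrank_le_card (v : Fin n → V) (A : Finset (Fin n)) : vrank v ↑A ≤ A.card := by
  classical
  rw [vrank, ← Finset.coe_image]
  exact (finrank_span_finset_le_card _).trans Finset.card_image_le

theorem vrank_le_vrank_univ (v : Fin n → V) (S : Set (Fin n)) : vrank v S ≤ vrank v Set.univ := by
  have := FiniteDimensional.span_of_finite ℝ (Set.toFinite (v '' Set.univ))
  exact finrank_mono (span_mono (image_mono (subset_univ S)))

theorem vrank_snoc_map_castSuccEmb (w : Fin n → V) (u : V) (B : Finset (Fin n)) :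
    vrank (Fin.snoc w u : Fin (n + 1) → V) ↑(B.map Fin.castSuccEmb) = vrank w ↑B := by
  have himage : (Fin.snoc w u : Fin (n + 1) → V) '' ↑(B.map Fin.castSuccEmb) = w '' ↑B := by
    simp [image_image]
  rw [vrank, himage, vrank]

theorem vrank_snoc_insert_last (w : Fin n → V) (u : V) (B : Finset (Fin n)) :
    vrank (Fin.snoc w u : Fin (n + 1) → V) ↑(insert (Fin.last n) (B.map Fin.castSuccEmb)) =
      Module.finrank ℝ ↥(span ℝ (insert u (w '' ↑B))) := by
  have himage : (Fin.snoc w u : Fin (n + 1) → V) '' ↑(insert (Fin.last n)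
      (B.map Fin.castSuccEmb)) = insert u (w '' ↑B) := by
    simp [image_insert_eq, image_image]
  rw [vrank, himage]

theorem vrank_snoc_univ (w : Fin n → V) (u : V) :
    vrank (Fin.snoc w u : Fin (n + 1) → V) Set.univ =
      Module.finrank ℝ ↥(span ℝ (insert u (range w))) := by
  rw [← Finset.coe_univ, Fin.univ_castSuccEmb, Finset.cons_eq_insert, vrank_snoc_insert_last,
    Finset.coe_univ, image_univ]

theorem finrank_span_insert_of_notMem {w : Fin n → V} {u : V} (hu : u ∉ span ℝ (range w))
    (S : Set (Fin n)) :
    Module.finrank ℝ ↥(span ℝ (insert u (w '' S))) = vrank w S + 1 := by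
  have := FiniteDimensional.span_of_finite ℝ (Set.toFinite (w '' S))
  rw [span_insert, sup_comm, vrank, finrank_sup_span_singleton_of_notMem]
  exact fun h => hu (span_mono (image_subset_range w S) h)

theorem finrank_span_insert_eq_vrank_contraction (w : Fin n → V) {u : V} (hu : u ≠ 0)
    (S : Set (Fin n)) :
    Module.finrank ℝ ↥(span ℝ (insert u (w '' S))) = vrank (contraction w u) S + 1 := by
  have := FiniteDimensional.span_of_finite ℝ (Set.toFinite (insert u (w '' S)))
  have hle : span ℝ {u} ≤ span ℝ (insert u (w '' S)) := span_mono (by simp)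
  have hmap : (span ℝ (insert u (w '' S))).map (span ℝ {u}).mkQ =
      span ℝ (contraction w u '' S) := by
    rw [span_insert, Submodule.map_sup, mkQ_map_self, bot_sup_eq, Submodule.map_span, image_image]
    rfl
  rw [← finrank_map_mkQ_add_finrank _ _ hle, finrank_span_singleton hu, hmap, vrank]

theorem tutteV_snoc_zero (w : Fin n → V) (x y : ℝ) :
    tutteV (Fin.snoc w 0 : Fin (n + 1) → V) x y = y * tutteV w x y := by
  rw [tutteV, sum_finset_fin_succ, tutteV, Finset.mul_sum]
  refine Finset.sum_congr rfl fun B _ => ?_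
  have hcard : B.card + 1 - vrank w ↑B = B.card - vrank w ↑B + 1 :=
    Nat.sub_add_comm (vrank_le_card w B)
  rw [vrank_snoc_univ, vrank_snoc_insert_last, vrank_snoc_map_castSuccEmb, span_insert_zero,
    span_insert_zero, Finset.card_insert_of_notMem (by simp), Finset.card_map, ← image_univ]
  change _ ^ (vrank w _ - vrank w _) * _ + _ ^ (vrank w _ - vrank w _) * _ ^ (_ - vrank w _) = _
  rw [hcard, pow_succ]
  ring

theorem tutteV_snoc_of_notMem_span {w : Fin n → V} {u : V} (hu : u ∉ span ℝ (range w)) (x y : ℝ) :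
    tutteV (Fin.snoc w u : Fin (n + 1) → V) x y = x * tutteV w x y := by
  rw [tutteV, sum_finset_fin_succ, tutteV, Finset.mul_sum]
  refine Finset.sum_congr rfl fun B _ => ?_
  have hrank : vrank w Set.univ + 1 - vrank w ↑B = vrank w Set.univ - vrank w ↑B + 1 :=
    Nat.sub_add_comm (vrank_le_vrank_univ w B)
  rw [vrank_snoc_univ, ← image_univ, vrank_snoc_insert_last, vrank_snoc_map_castSuccEmb,
    finrank_span_insert_of_notMem hu, finrank_span_insert_of_notMem hu, hrank,
    Finset.card_insert_of_notMem (by simp), Finset.card_map, Nat.add_sub_add_right,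
    Nat.add_sub_add_right, pow_succ]
  ring

theorem tutteV_snoc_of_mem_span {w : Fin n → V} {u : V} (hu : u ≠ 0)
    (huw : u ∈ span ℝ (range w)) (x y : ℝ) :
    tutteV (Fin.snoc w u : Fin (n + 1) → V) x y =
      tutteV w x y + tutteV (contraction w u) x y := by
  rw [tutteV, sum_finset_fin_succ, tutteV, tutteV, ← Finset.sum_add_distrib]
  have hrank_w : vrank (Fin.snoc w u : Fin (n + 1) → V) Set.univ = vrank w Set.univ := by
    rw [vrank_snoc_univ, span_insert_eq_span huw, vrank, image_univ]
  have hrank_contraction : vrank (Fin.snoc w u : Fin (n + 1) → V) Set.univ =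
      vrank (contraction w u) Set.univ + 1 := by
    rw [vrank_snoc_univ, ← image_univ, finrank_span_insert_eq_vrank_contraction w hu]
  refine Finset.sum_congr rfl fun B _ => congrArg₂ (· + ·) ?_ ?_
  · rw [hrank_w, vrank_snoc_map_castSuccEmb, Finset.card_map]
  · rw [hrank_contraction, vrank_snoc_insert_last, finrank_span_insert_eq_vrank_contraction w hu,
      Finset.card_insert_of_notMem (by simp), Finset.card_map, Nat.add_sub_add_right,
      Nat.add_sub_add_right]

end Tutte

section Expansion

variable {V : Type*} [AddCommGroup V] [Module ℝ V] {n : ℕ}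

theorem sum_activityWeight_reorient_snoc {R : Type*} [CommSemiring R] (w : Fin n → V) (u : V)
    (x y : R) :
    ∑ A : Finset (Fin (n + 1)), activityWeight (A.piecewise (fun _ => y) fun _ => x)
        (reorient (Fin.snoc w u : Fin (n + 1) → V) A) =
      ∑ B : Finset (Fin n),
        (activityWeight (Fin.snoc (B.piecewise (fun _ => y) fun _ => x) x : Fin (n + 1) → R)
            (Fin.snoc (reorient w B) u : Fin (n + 1) → V) +
          activityWeight (Fin.snoc (B.piecewise (fun _ => y) fun _ => x) y : Fin (n + 1) → R)
            (Fin.snoc (reorient w B) (-u) : Fin (n + 1) → V)) := by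
  rw [sum_finset_fin_succ]
  simp only [reorient_snoc_map_castSuccEmb, reorient_snoc_insert_last, piecewise_map_castSuccEmb,
    piecewise_insert_last_map_castSuccEmb]
  rfl

theorem tutteV_fin_zero (v : Fin 0 → V) (x y : ℝ) : tutteV v x y = 1 := by
  have huniv : (Set.univ : Set (Fin 0)) = ↑(∅ : Finset (Fin 0)) := Subsingleton.elim _ _
  rw [tutteV, Fintype.sum_unique, Subsingleton.elim default (∅ : Finset (Fin 0)), huniv]
  simp

theorem tutteV_add_zero_eq_sum_activityWeight (v : Fin n → V) (x y : ℝ) :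
    tutteV v (x + y) 0 =
      ∑ A : Finset (Fin n),
        activityWeight (A.piecewise (fun _ => y) fun _ => x) (reorient v A) := by
  induction n generalizing V with
  | zero =>
    have hacyclic (A : Finset (Fin 0)) : IsAcyclic (reorient v A) := ⟨0, fun i => i.elim0⟩
    simp [tutteV_fin_zero, activityWeight, hacyclic]
  | succ n ih =>
    obtain ⟨w, u, rfl⟩ : ∃ w u, v = Fin.snoc w u := ⟨_, _, (Fin.snoc_init_self v).symm⟩
    rw [sum_activityWeight_reorient_snoc]
    by_cases huw : u ∈ span ℝ (range w)
    · rcases eq_or_ne u 0 with rfl | hu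
      · simp only [tutteV_snoc_zero, activityWeight_snoc_zero, neg_zero, zero_mul, add_zero,
          Finset.sum_const_zero]
      · rw [tutteV_snoc_of_mem_span hu huw, ih w, ih (contraction w u), ← Finset.sum_add_distrib]
        refine Finset.sum_congr rfl fun B _ => ?_
        rw [activityWeight_snoc_add_activityWeight_snoc_neg hu (by rwa [span_range_reorient]),
          contraction_reorient]
    · rw [tutteV_snoc_of_notMem_span huw, ih w, Finset.mul_sum]
      refine Finset.sum_congr rfl fun B _ => ?_
      rw [activityWeight_snoc_of_notMem_span (by rwa [span_range_reorient]),
        activityWeight_snoc_of_notMem_span (by rwa [span_range_reorient, neg_mem_iff]), add_mul]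

theorem theta_eq_zero_and_thetaBar_eq_zero_iff (v : Fin n → V) (A : Finset (Fin n)) :
    theta v A = 0 ∧ thetaBar v A = 0 ↔ IsAcyclic (reorient v A) := by
  simp only [theta, thetaBar, ncard_eq_zero (toFinite _), Set.eq_empty_iff_forall_notMem,
    isAcyclic_iff_forall_not_oActive, ← forall_and]
  refine forall_congr' fun a => ?_
  by_cases ha : a ∈ A <;> simp [ha]

theorem prod_mulIndicator_dualActiveSet_reorient {R : Type*} [CommMonoid R] (v : Fin n → V)
    (A : Finset (Fin n)) (x y : R) :
    ∏ a, (dualActiveSet (reorient v A)).mulIndicator (A.piecewise (fun _ => y) fun _ => x) a =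
      x ^ thetaStar v A * y ^ thetaStarBar v A := by
  classical
  simp only [thetaStar, thetaStarBar, ncard_eq_toFinset_card', ← Finset.prod_const,
    toFinset_ofPred, Finset.prod_filter, ← Finset.prod_mul_distrib]
  refine Finset.prod_congr rfl fun a _ => ?_
  by_cases ha : a ∈ A <;> by_cases hactive : ODualActive (reorient v A) a <;>
    simp [ha, hactive, dualActiveSet]

end Expansion

theorem statement8_general {n : ℕ} {V : Type*} [AddCommGroup V] [Module ℝ V] (v : Fin n → V)
    (x y : ℝ) :
    tutteV v (x + y) 0 =
      ∑ A ∈ Finset.univ.filter (fun A => theta v A = 0 ∧ thetaBar v A = 0),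
        x ^ thetaStar v A * y ^ thetaStarBar v A := by
  classical
  simp only [tutteV_add_zero_eq_sum_activityWeight, activityWeight,
    prod_mulIndicator_dualActiveSet_reorient, ← theta_eq_zero_and_thetaBar_eq_zero_iff,
    Finset.sum_filter]

/-- two alternate expansions of `t(2,0)` in terms of `θ`-activities. -/
theorem statement8 {n : ℕ} {V : Type*} [AddCommGroup V] [Module ℝ V] [FiniteDimensional ℝ V]
    (v : Fin n → V) :
    tutteV v 2 0 =
      ∑ A ∈ Finset.univ.filter
        (fun A : Finset (Fin n) => thetaStarBar v A = 0 ∧ theta v A = 0 ∧ thetaBar v A = 0),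
        (2 : ℝ) ^ thetaStar v A ∧
    tutteV v 2 0 =
      ∑ A ∈ Finset.univ.filter
        (fun A : Finset (Fin n) => thetaStar v A = 0 ∧ theta v A = 0 ∧ thetaBar v A = 0),
        (2 : ℝ) ^ thetaStarBar v A := by
  exact ⟨by simpa [sum_filter_mul_zero_pow] using statement8_general v 2 0,
    by simpa [← sum_filter_mul_zero_pow, mul_comm] using statement8_general v 0 2⟩
end
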